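/- Suppose adm satisfies: (i) for all subgroups K ≤ H and J ≤ H of G, adm(J, H) implies adm(K ∩ J, K), and (ii) conjugation invariance: adm(K, H) implies adm(gKg⁻¹, gHg⁻¹) for every g ∈ G. Let H ≤ G be a subgroup with adm(H, G). Then for every finite G-set T, the action map ε_T : G ×_H (res_H T) → T sending [g, t] to g·t (where res_H T is T with the restricted H-action) lies in P_adm. -/

import Mathlib

/-!
The induced set embeds in `(G ⧸ H) × T` through `[g, t] ↦ (g H, g • t)`, so the stabilizer of
`[g, t]` is `Stab (g • t) ⊓ g H g⁻¹` (`stabilizer_mk`). Since `adm H ⊤`, conjugation invariance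
gives `adm (g H g⁻¹) ⊤`, and restricting along `Stab (g • t) ≤ ⊤` gives
`adm (Stab (g • t) ⊓ g H g⁻¹) (Stab (g • t))`, which is the claim at `[g, t]`.
-/

open MulAction

/-- A map of `G`-sets is a morphism when it is equivariant. -/
def Equivariant (G : Type) [Group G] {S T : Type} [MulAction G S] [MulAction G T]
    (f : S → T) : Prop :=
  ∀ (g : G) (s : S), f (g • s) = g • f s

variable {G : Type} [Group G]

/-- The relation `(g * h, s) ∼ (g, h • s)` (for `h ∈ H`) generating the induced set. -/
def indRel (H : Subgroup G) (S : Type) [MulAction H S] : G × S → G × S → Prop :=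
  fun p q => ∃ h : H, p.1 = q.1 * (h : G) ∧ q.2 = h • p.2

/-- The induced `G`-set `G ×_H S` of a finite `H`-set `S`: the quotient of `G × S` by
the relation `(g h, s) ∼ (g, h • s)` for `h ∈ H`. -/
def Induced (H : Subgroup G) (S : Type) [MulAction H S] : Type :=
  Quot (indRel H S)

/-- The class `[g, s]` of `(g, s)` in `G ×_H S`. -/
def Induced.mk (H : Subgroup G) {S : Type} [MulAction H S] (g : G) (s : S) :
    Induced H S :=
  Quot.mk _ (g, s)

/-- `G` acts on `G ×_H S` by left multiplication on the first coordinate. -/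
instance Induced.instSMul (H : Subgroup G) (S : Type) [MulAction H S] :
    SMul G (Induced H S) where
  smul g := Quot.map (fun p => (g * p.1, p.2)) (by
    rintro ⟨g1, s1⟩ ⟨g2, s2⟩ ⟨h, h1, h2⟩
    dsimp only at h1 h2 ⊢
    exact ⟨h, by rw [h1, mul_assoc], h2⟩)

instance Induced.instMulAction (H : Subgroup G) (S : Type) [MulAction H S] :
    MulAction G (Induced H S) where
  one_smul x := by
    induction x using Quot.ind with
    | _ p =>
      show Quot.mk _ (1 * p.1, p.2) = Quot.mk _ (p.1, p.2)
      rw [one_mul]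
  mul_smul a b x := by
    induction x using Quot.ind with
    | _ p =>
      show Quot.mk _ (a * b * p.1, p.2) = Quot.mk _ (a * (b * p.1), p.2)
      rw [mul_assoc]

instance Induced.instFinite (H : Subgroup G) (S : Type) [Finite G] [Finite S]
    [MulAction H S] : Finite (Induced H S) :=
  Quot.finite _

/-- The `G`-equivariant map `G ×_H f : G ×_H S → G ×_H T` induced by an `H`-equivariant
map `f : S → T`, sending `[g, s]` to `[g, f s]`. -/
def indMap (H : Subgroup G) {S T : Type} [MulAction H S] [MulAction H T]
    (f : S → T) (hf : ∀ (h : H) (s : S), f (h • s) = h • f s) :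
    Induced H S → Induced H T :=
  Quot.map (fun p => (p.1, f p.2)) (by
    rintro ⟨g1, s1⟩ ⟨g2, s2⟩ ⟨h, h1, h2⟩
    dsimp only at h1 h2 ⊢
    exact ⟨h, h1, by rw [h2, hf]⟩)

/-- For a finite `G`-set `T` (regarded as an `H`-set by restriction), the action map
`ε_T : G ×_H (res_H T) → T` sends `[g, t]` to `g • t`. -/
def actionMap (H : Subgroup G) (T : Type) [MulAction G T] : Induced H T → T :=
  Quot.lift (fun p => p.1 • p.2) (by
    rintro ⟨g1, t1⟩ ⟨g2, t2⟩ ⟨h, h1, h2⟩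
    dsimp only at h1 h2 ⊢
    rw [h1, h2, Subgroup.smul_def, smul_smul])

/-- `P_adm`: a morphism `f : S → T` of `G`-sets lies in `P_adm` iff
`adm (Stab s) (Stab (f s))` holds for every `s ∈ S`. -/
def Padm (G : Type) [Group G] (adm : Subgroup G → Subgroup G → Prop)
    {S T : Type} [MulAction G S] [MulAction G T] (f : S → T) : Prop :=
  ∀ s : S, adm (stabilizer G s) (stabilizer G (f s))

/-- The equivariant projection `G ×_H S → G ⧸ H`, `[g, s] ↦ g H`. -/
def inducedToQuotient (H : Subgroup G) (S : Type) [MulAction H S] : Induced H S → G ⧸ H :=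
  Quot.lift (fun p => (p.1 : G ⧸ H)) (by
    rintro ⟨g1, s1⟩ ⟨g2, s2⟩ ⟨h, h1, -⟩
    dsimp only at h1 ⊢
    rw [h1, QuotientGroup.mk_mul_of_mem _ h.2])

theorem stabilizer_mk (H : Subgroup G) (T : Type) [MulAction G T] (g : G) (t : T) :
    stabilizer G (Induced.mk H g t) =
      stabilizer G (g • t) ⊓ H.map (MulAut.conj g).toMonoidHom := by
  ext a
  rw [Subgroup.mem_inf, mem_stabilizer_iff, mem_stabilizer_iff]
  change Induced.mk H (a * g) t = Induced.mk H g t ↔ _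
  constructor
  · intro e
    have e1 : (a * g) • t = g • t := congrArg (actionMap H T) e
    have e2 : ((a * g : G) : G ⧸ H) = (g : G ⧸ H) := congrArg (inducedToQuotient H T) e
    refine ⟨by rw [smul_smul, e1], g⁻¹ * (a * g), QuotientGroup.eq.1 e2.symm, ?_⟩
    simp [mul_assoc]
  · rintro ⟨e, h, hh, rfl⟩
    -- `a = g h g⁻¹` fixes `g • t` exactly when `h` fixes `t`, so `[g h, t] = [g, h • t] = [g, t]`.
    refine Quot.sound ⟨⟨h, hh⟩, by simp, ?_⟩
    have e' : g • h • t = g • t := by simpa [smul_smul] using e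
    exact (smul_left_cancel g e').symm

/-- suppose `adm` satisfies (i) for all subgroups `K ≤ H` and `J ≤ H` of
`G`, `adm(J, H)` implies `adm(K ∩ J, K)`, and (ii) conjugation invariance.  Let `H ≤ G`
be a subgroup with `adm(H, G)`.  Then for every finite `G`-set `T`, the action map
`ε_T : G ×_H (res_H T) → T` sending `[g, t]` to `g • t` lies in `P_adm`. -/
theorem stmt13 (G : Type) [Group G] [Finite G]
    (adm : Subgroup G → Subgroup G → Prop)
    (hstab : ∀ K J H : Subgroup G, K ≤ H → J ≤ H → adm J H → adm (K ⊓ J) K)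
    (hconj : ∀ (g : G) (K H : Subgroup G), K ≤ H → adm K H →
      adm (K.map (MulAut.conj g).toMonoidHom) (H.map (MulAut.conj g).toMonoidHom))
    (H : Subgroup G) (hH : adm H ⊤)
    (T : Type) [Finite T] [MulAction G T] :
    Padm G adm (actionMap H T) := by
  rintro ⟨g, t⟩
  have hc := hconj g H ⊤ le_top hH
  rw [Subgroup.map_top_of_surjective _ (MulAut.conj g).surjective] at hc
  have hs := hstab (stabilizer G (g • t)) _ ⊤ le_top le_top hc
  rw [← stabilizer_mk] at hs
  exact hs
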